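/- Let $f \in \mathbb{C}[X_0,X_1,X_2]$ and $g \in \mathbb{C}[X_3,X_4,X_5]$ be homogeneous polynomials of degree 3 that each define a smooth plane curve, set $F(z_0,\dots,z_5) = f(z_0,z_1,z_2) + g(z_3,z_4,z_5)$, let $\omega$ be a primitive third root of unity, and let $u(z_0,\dots,z_5) = (z_0,z_1,z_2,\omega z_3,\omega z_4,\omega z_5)$. Then the map sending a pair $([a],[b])$, with $[a]$ a point of the plane cubic $\{f=0\} \subset \mathbb{P}^2$ and $[b]$ a point of the plane cubic $\{g=0\} \subset \mathbb{P}^2$, to the subspace $\mathrm{span}\big((a_0,a_1,a_2,0,0,0),\,(0,0,0,b_0,b_1,b_2)\big) \subseteq \mathbb{C}^6$ is a well-defined bijection from the product of the two curves onto the set of 2-dimensional linear subspaces $L \subseteq \mathbb{C}^6$ with $F|_L \equiv 0$ and $u(L) = L$. In other words, the fixed locus of the induced automorphism $u_X$ on the Fano variety of lines of $Y = \{F=0\}$ is in bijection with the product of the two plane cubic curves. -/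

import Mathlib

open MvPolynomial

/-! A subspace of `V × W` stable under `(v, w) ↦ (v, ω w)` with `ω ≠ 0, 1` is a product `A × B`
of subspaces. If `f + g` vanishes on a line of this form, then `f` vanishes on `A` and `g` on `B`;
since smooth plane curves of degree at least 2 contain no line, `A` and `B` are points.

A smooth plane curve `{f = 0}` contains no line `V`: if `r` spans a complement of `V`, the
derivative of `f` along `r`, of positive degree, has a zero on `V`. The derivatives of `f` along `V`
vanish there too, so the curve is singular at that point. -/

section DirectionalDerivative

variable {R σ : Type*} [CommSemiring R]

lemma eval_smul_of_isHomogeneous {f : MvPolynomial σ R} {d : ℕ} (hf : f.IsHomogeneous d)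
    (c : R) (x : σ → R) : eval (c • x) f = c ^ d * eval x f := by
  rw [eval_eq, eval_eq, Finset.mul_sum]
  refine Finset.sum_congr rfl fun s hs => ?_
  have hdeg : ∑ i ∈ s.support, s i = d := by
    simpa [Finsupp.weight_apply, Finsupp.sum] using hf (mem_support_iff.mp hs)
  simp only [Pi.smul_apply, smul_eq_mul, mul_pow, Finset.prod_mul_distrib,
    Finset.prod_pow_eq_pow_sum, hdeg]
  ring

lemma eval_zero_of_isHomogeneous {f : MvPolynomial σ R} {d : ℕ} (hf : f.IsHomogeneous d)
    (hd : d ≠ 0) : eval 0 f = 0 := by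
  simpa [hd] using eval_smul_of_isHomogeneous hf 0 0

/-- The pullback of polynomials along the parametrized line `t ↦ x + t v`, as a homomorphism to
univariate polynomials in `t`. -/
noncomputable def restrictToLine (x v : σ → R) : MvPolynomial σ R →ₐ[R] Polynomial R :=
  aeval fun i => Polynomial.C (x i) + Polynomial.X * Polynomial.C (v i)

lemma eval_restrictToLine (x v : σ → R) (f : MvPolynomial σ R) (t : R) :
    (restrictToLine x v f).eval t = eval (x + t • v) f := by
  induction f using MvPolynomial.induction_on with
  | C a => simp [restrictToLine]
  | add p q hp hq => simp [hp, hq]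
  | mul_X p i hp =>
    rw [map_mul, Polynomial.eval_mul, hp, map_mul]
    simp [restrictToLine, mul_comm t]

variable [Fintype σ]

/-- The directional derivative `∑ i, v i • ∂/∂X i` of polynomials, as a derivation depending
linearly on the direction `v`. -/
noncomputable def dirDeriv :
    (σ → R) →ₗ[R] Derivation R (MvPolynomial σ R) (MvPolynomial σ R) :=
  Fintype.linearCombination R fun i => pderiv i

lemma dirDeriv_single [DecidableEq σ] (i : σ) :
    dirDeriv (Pi.single i (1 : R)) = pderiv i := by
  rw [dirDeriv, Fintype.linearCombination_apply_single, one_smul]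

lemma dirDeriv_apply (v : σ → R) (f : MvPolynomial σ R) :
    dirDeriv v f = ∑ i, v i • pderiv i f := by
  rw [dirDeriv, Fintype.linearCombination_apply, ← Derivation.coeFnAddMonoidHom_apply, map_sum,
    Finset.sum_apply]
  rfl

lemma dirDeriv_X (v : σ → R) (i : σ) : dirDeriv v (X i) = C (v i) := by
  classical
  simp [dirDeriv_apply, pderiv_X, Pi.single_apply, smul_eq_C_mul]

lemma isHomogeneous_dirDeriv {f : MvPolynomial σ R} {d : ℕ} (hf : f.IsHomogeneous d)
    (v : σ → R) : (dirDeriv v f).IsHomogeneous (d - 1) := by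
  rw [dirDeriv_apply]
  refine IsHomogeneous.sum _ _ _ fun i _ => ?_
  rw [smul_eq_C_mul]
  exact hf.pderiv.C_mul _

lemma derivative_restrictToLine (x v : σ → R) (f : MvPolynomial σ R) :
    (restrictToLine x v f).derivative = restrictToLine x v (dirDeriv v f) := by
  induction f using MvPolynomial.induction_on with
  | C a => simp [restrictToLine, ← algebraMap_eq]
  | add p q hp hq => simp [hp, hq]
  | mul_X p i hp =>
    have hX : (restrictToLine x v (X i)).derivative = restrictToLine x v (C (v i)) := by
      simp [restrictToLine]
    rw [map_mul, Polynomial.derivative_mul, hp, hX, Derivation.leibniz, dirDeriv_X, smul_eq_mul,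
      smul_eq_mul, map_add, map_mul, map_mul]
    ring

end DirectionalDerivative

section LinearSubspaces

lemma eval_dirDeriv_eq_zero {R σ : Type*} [CommRing R] [IsDomain R] [Infinite R]
    [Fintype σ] {f : MvPolynomial σ R} {V : Submodule R (σ → R)}
    (hV : ∀ x ∈ V, eval x f = 0) {x v : σ → R} (hx : x ∈ V) (hv : v ∈ V) :
    eval x (dirDeriv v f) = 0 := by
  have hline : restrictToLine x v f = 0 := Polynomial.funext fun t => by
    rw [eval_restrictToLine, Polynomial.eval_zero, hV _ (V.add_mem hx (V.smul_mem t hv))]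
  have hderiv := derivative_restrictToLine x v f
  rw [hline, Polynomial.derivative_zero] at hderiv
  simpa [eval_restrictToLine] using (congrArg (Polynomial.eval 0) hderiv).symm

variable {K σ : Type*} [Field K]

lemma exists_sup_span_singleton_eq_top {E : Type*} [AddCommGroup E] [Module K E]
    [FiniteDimensional K E] {V : Submodule K E}
    (hV : Module.finrank K E ≤ Module.finrank K V + 1) : ∃ r, V ⊔ K ∙ r = ⊤ := by
  obtain ⟨U, hU⟩ := V.exists_isCompl
  have hfin : Module.finrank K U ≤ 1 := by
    have := Submodule.finrank_add_eq_of_isCompl hU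
    lia
  obtain ⟨r, hr⟩ := (Submodule.finrank_le_one_iff_isPrincipal U).mp hfin
  exact ⟨r, hr ▸ hU.sup_eq_top⟩

lemma exists_eval_line_eq_const [IsAlgClosed K] {f : MvPolynomial σ K} {x v : σ → K}
    (hne : ∀ t : K, eval (x + t • v) f ≠ 0) : ∃ c, ∀ t : K, eval (x + t • v) f = c := by
  have hdeg : (restrictToLine x v f).degree = 0 := by
    by_contra hdeg
    obtain ⟨t, ht⟩ := IsAlgClosed.exists_root _ hdeg
    exact hne t (by rwa [← eval_restrictToLine])
  refine ⟨(restrictToLine x v f).coeff 0, fun t => ?_⟩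
  rw [← eval_restrictToLine, Polynomial.eq_C_of_degree_eq_zero hdeg]
  simp

lemma eval_eq_zero_of_eval_line_eq_const [Infinite K] {f : MvPolynomial σ K} {d : ℕ}
    (hf : f.IsHomogeneous d) (hd : d ≠ 0) {p q : σ → K} {c : K}
    (hc : ∀ t : K, eval (p + t • q) f = c) : eval q f = 0 := by
  have hX : Polynomial.X * restrictToLine q p f =
      Polynomial.X * (Polynomial.C c * Polynomial.X ^ d) := by
    refine Polynomial.funext fun t => ?_
    rcases eq_or_ne t 0 with rfl | ht
    · simp
    · have hline : q + t • p = t • (p + t⁻¹ • q) := by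
        rw [smul_add, smul_inv_smul₀ ht, add_comm]
      simp only [Polynomial.eval_mul, Polynomial.eval_X, Polynomial.eval_C, Polynomial.eval_pow,
        eval_restrictToLine, hline, eval_smul_of_isHomogeneous hf, hc, mul_comm c]
  have hmono := mul_left_cancel₀ Polynomial.X_ne_zero hX
  simpa [eval_restrictToLine, hd] using congrArg (Polynomial.eval 0) hmono

lemma exists_ne_zero_mem_eval_eq_zero [IsAlgClosed K] {f : MvPolynomial σ K} {d : ℕ}
    (hf : f.IsHomogeneous d) (hd : d ≠ 0) {V : Submodule K (σ → K)}
    (hV : 2 ≤ Module.finrank K V) : ∃ x ∈ V, x ≠ 0 ∧ eval x f = 0 := by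
  have : Nontrivial V := Module.nontrivial_of_finrank_pos (R := K) (by lia)
  obtain ⟨p, hp⟩ := exists_ne (0 : V)
  obtain ⟨q, hpq⟩ := exists_linearIndependent_pair_of_one_lt_finrank (R := K) hV hp
  by_contra! hne
  have hline (t : K) : eval (p + t • q : σ → K) f ≠ 0 := by
    refine hne _ (V.add_mem p.2 (V.smul_mem t q.2)) fun h => ?_
    simpa using (LinearIndependent.pair_iff.mp hpq 1 t (Subtype.ext (by simpa using h))).1
  obtain ⟨c, hc⟩ := exists_eval_line_eq_const hline
  refine hne q q.2 (fun h => ?_) (eval_eq_zero_of_eval_line_eq_const hf hd hc)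
  exact hpq.ne_zero 1 (Subtype.ext h)

lemma exists_singular_point_of_vanishing_on_hyperplane [IsAlgClosed K] [Fintype σ]
    {f : MvPolynomial σ K} {d : ℕ} (hf : f.IsHomogeneous d) (hd : 2 ≤ d) {V : Submodule K (σ → K)}
    (hV : ∀ x ∈ V, eval x f = 0) (hdim : 2 ≤ Module.finrank K V)
    (hcodim : Fintype.card σ ≤ Module.finrank K V + 1) :
    ∃ x ∈ V, x ≠ 0 ∧ ∀ i, eval x (pderiv i f) = 0 := by
  classical
  obtain ⟨r, hr⟩ := exists_sup_span_singleton_eq_top (V := V) (by simpa using hcodim)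
  obtain ⟨x, hxV, hx, hxr⟩ :=
    exists_ne_zero_mem_eval_eq_zero (isHomogeneous_dirDeriv hf r) (by lia) hdim
  refine ⟨x, hxV, hx, fun i => ?_⟩
  obtain ⟨v, hv, w, hw, hvw⟩ :=
    Submodule.mem_sup.mp (hr ▸ Submodule.mem_top : Pi.single i 1 ∈ V ⊔ K ∙ r)
  obtain ⟨c, rfl⟩ := Submodule.mem_span_singleton.mp hw
  rw [← dirDeriv_single, ← hvw, map_add, map_smul, Derivation.add_apply, Derivation.smul_apply,
    map_add, smul_eval, hxr, eval_dirDeriv_eq_zero hV hxV hv, mul_zero, add_zero]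

lemma finrank_le_one_of_smooth_plane_curve [IsAlgClosed K] {f : MvPolynomial (Fin 3) K} {d : ℕ}
    (hf : f.IsHomogeneous d) (hd : 2 ≤ d)
    (hsmooth : ∀ x : Fin 3 → K, x ≠ 0 → eval x f = 0 → ∃ i, eval x (pderiv i f) ≠ 0)
    (V : Submodule K (Fin 3 → K)) (hV : ∀ x ∈ V, eval x f = 0) : Module.finrank K V ≤ 1 := by
  by_contra! hdim
  obtain ⟨x, hxV, hx, hsing⟩ := exists_singular_point_of_vanishing_on_hyperplane hf hd hV hdim
    (by rw [Fintype.card_fin]; lia)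
  obtain ⟨i, hi⟩ := hsmooth x hx (hV x hxV)
  exact hi (hsing i)

end LinearSubspaces

section Product

variable {K V W : Type*} [Field K] [AddCommGroup V] [Module K V] [AddCommGroup W] [Module K W]

/-- The endomorphism `(v, w) ↦ (v, ω w)` of `V × W`. -/
def scaleSnd (V W : Type*) [AddCommGroup V] [Module K V] [AddCommGroup W] [Module K W] (ω : K) :
    V × W →ₗ[K] V × W :=
  LinearMap.prodMap LinearMap.id (ω • LinearMap.id)

lemma map_scaleSnd_prod {ω : K} (hω : ω ≠ 0) (A : Submodule K V) (B : Submodule K W) :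
    (A.prod B).map (scaleSnd V W ω) = A.prod B := by
  rw [scaleSnd, LinearMap.prodMap_map_prod, Submodule.map_smul _ _ _ hω, Submodule.map_id,
    Submodule.map_id]

lemma eq_prod_of_map_scaleSnd_le {ω : K} (hω : ω ≠ 1) {L : Submodule K (V × W)}
    (hL : L.map (scaleSnd V W ω) ≤ L) :
    L = (L.map (LinearMap.fst K V W)).prod (L.map (LinearMap.snd K V W)) := by
  have hsnd : ∀ z ∈ L, ((0, z.2) : V × W) ∈ L := fun z hz => by
    have hdiff : scaleSnd V W ω z - z = (ω - 1) • (0, z.2) := by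
      simp [scaleSnd, Prod.ext_iff, sub_smul]
    rw [← L.smul_mem_iff (sub_ne_zero.mpr hω), ← hdiff]
    exact L.sub_mem (hL (Submodule.mem_map_of_mem hz)) hz
  have hfst : ∀ z ∈ L, ((z.1, 0) : V × W) ∈ L := fun z hz => by
    simpa [Prod.sub_def] using L.sub_mem hz (hsnd z hz)
  refine le_antisymm (fun z hz => ⟨⟨z, hz, rfl⟩, ⟨z, hz, rfl⟩⟩) ?_
  rintro ⟨_, _⟩ ⟨⟨x, hx, rfl⟩, ⟨y, hy, rfl⟩⟩
  simpa using L.add_mem (hfst x hx) (hsnd y hy)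

lemma finrank_submodule_prod [FiniteDimensional K V] [FiniteDimensional K W]
    (A : Submodule K V) (B : Submodule K W) :
    Module.finrank K (A.prod B) = Module.finrank K A + Module.finrank K B := by
  have hinj : Function.Injective (A.subtype.prodMap B.subtype) :=
    Prod.map_injective.mpr ⟨A.injective_subtype, B.injective_subtype⟩
  rw [← Module.finrank_prod, ← LinearMap.finrank_range_of_inj hinj, LinearMap.range_prodMap,
    Submodule.range_subtype, Submodule.range_subtype]

lemma forall_mem_submodule_eq_zero_iff {P : V → K}
    (hP : ∀ (c : K) (v : V), P v = 0 → P (c • v) = 0) (p : Projectivization K V) :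
    (∀ v ∈ p.submodule, P v = 0) ↔ P p.rep = 0 := by
  rw [p.submodule_eq]
  refine ⟨fun h => h _ (Submodule.mem_span_singleton_self _), fun h v hv => ?_⟩
  obtain ⟨c, rfl⟩ := Submodule.mem_span_singleton.mp hv
  exact hP c _ h

lemma forall_mem_prod_add_eq_zero_iff {P : V → K} {Q : W → K} (hP : P 0 = 0) (hQ : Q 0 = 0)
    (A : Submodule K V) (B : Submodule K W) :
    (∀ z ∈ A.prod B, P z.1 + Q z.2 = 0) ↔ (∀ a ∈ A, P a = 0) ∧ ∀ b ∈ B, Q b = 0 := by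
  refine ⟨fun h => ⟨fun a ha => ?_, fun b hb => ?_⟩, fun h z hz => ?_⟩
  · simpa [hQ] using h (a, 0) ⟨ha, B.zero_mem⟩
  · simpa [hP] using h (0, b) ⟨A.zero_mem, hb⟩
  · rw [h.1 _ hz.1, h.2 _ hz.2, add_zero]

lemma injective_submodule_prod :
    Function.Injective fun p : Projectivization K V × Projectivization K W =>
      p.1.submodule.prod p.2.submodule := by
  intro p q h
  refine Prod.ext (Projectivization.submodule_injective ?_)
    (Projectivization.submodule_injective ?_)
  · simpa only [Submodule.prod_map_fst] using congrArg (Submodule.map (LinearMap.fst K V W)) h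
  · simpa only [Submodule.prod_map_snd] using congrArg (Submodule.map (LinearMap.snd K V W)) h

theorem bijOn_submodule_prod_stable_lines [FiniteDimensional K V] [FiniteDimensional K W]
    {P : V → K} {Q : W → K} (hP₀ : P 0 = 0) (hQ₀ : Q 0 = 0)
    (hP : ∀ (c : K) (v : V), P v = 0 → P (c • v) = 0)
    (hQ : ∀ (c : K) (w : W), Q w = 0 → Q (c • w) = 0)
    (hPline : ∀ A : Submodule K V, (∀ v ∈ A, P v = 0) → Module.finrank K A ≤ 1)
    (hQline : ∀ B : Submodule K W, (∀ w ∈ B, Q w = 0) → Module.finrank K B ≤ 1)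
    {ω : K} (hω₀ : ω ≠ 0) (hω₁ : ω ≠ 1) :
    Set.BijOn (fun p : Projectivization K V × Projectivization K W =>
        p.1.submodule.prod p.2.submodule)
      {p | P p.1.rep = 0 ∧ Q p.2.rep = 0}
      {L | Module.finrank K L = 2 ∧ (∀ z ∈ L, P z.1 + Q z.2 = 0) ∧
        L.map (scaleSnd V W ω) = L} := by
  refine ⟨fun p hp => ⟨?_, ?_, map_scaleSnd_prod hω₀ _ _⟩, injective_submodule_prod.injOn, ?_⟩
  · rw [finrank_submodule_prod, p.1.finrank_submodule, p.2.finrank_submodule]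
  · rwa [forall_mem_prod_add_eq_zero_iff hP₀ hQ₀, forall_mem_submodule_eq_zero_iff hP,
      forall_mem_submodule_eq_zero_iff hQ]
  rintro L ⟨hdim, hvanish, hstable⟩
  have hprod := eq_prod_of_map_scaleSnd_le hω₁ hstable.le
  set A := L.map (LinearMap.fst K V W)
  set B := L.map (LinearMap.snd K V W)
  rw [hprod, finrank_submodule_prod] at hdim
  rw [hprod, forall_mem_prod_add_eq_zero_iff hP₀ hQ₀] at hvanish
  have hA := hPline A hvanish.1
  have hB := hQline B hvanish.2
  refine ⟨(.mk'' A (by lia), .mk'' B (by lia)), ⟨?_, ?_⟩, ?_⟩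
  · simpa [← forall_mem_submodule_eq_zero_iff hP] using hvanish.1
  · simpa [← forall_mem_submodule_eq_zero_iff hQ] using hvanish.2
  · simpa using hprod.symm

end Product

section Append

variable {K : Type*} [Field K] {m n : ℕ}

/-- `Fin.appendEquiv` as a linear equivalence: concatenation of coordinate vectors. -/
def appendLinearEquiv (K : Type*) [Field K] (m n : ℕ) :
    ((Fin m → K) × (Fin n → K)) ≃ₗ[K] (Fin (m + n) → K) where
  __ := Fin.appendEquiv m n
  map_add' x y := by ext i; refine Fin.addCases ?_ ?_ i <;> simp
  map_smul' c x := by ext i; refine Fin.addCases ?_ ?_ i <;> simp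

lemma appendLinearEquiv_apply (z : (Fin m → K) × (Fin n → K)) :
    appendLinearEquiv K m n z = Fin.append z.1 z.2 := rfl

lemma span_append_pair_eq_map_prod (a : Fin m → K) (b : Fin n → K) :
    Submodule.span K {Fin.append a (0 : Fin n → K), Fin.append (0 : Fin m → K) b} =
      ((K ∙ a).prod (K ∙ b)).map (appendLinearEquiv K m n).toLinearMap := by
  rw [← LinearMap.span_inl_union_inr, Submodule.map_span, Set.image_union, Set.image_singleton,
    Set.image_singleton, Set.image_singleton, Set.image_singleton, Set.singleton_union]
  rfl

lemma eval_appendLinearEquiv_rename_add_rename (f : MvPolynomial (Fin m) K)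
    (g : MvPolynomial (Fin n) K) (z : (Fin m → K) × (Fin n → K)) :
    eval (appendLinearEquiv K m n z) (rename (Fin.castAdd n) f + rename (Fin.natAdd m) g) =
      eval z.1 f + eval z.2 g := by
  simp only [appendLinearEquiv_apply, map_add, eval_rename, Function.comp_def, Fin.append_left,
    Fin.append_right]

lemma comp_appendLinearEquiv_eq_of_apply {ω : K} {u : (Fin (m + n) → K) →ₗ[K] (Fin (m + n) → K)}
    (hu : ∀ z i, u z i = if (i : ℕ) < m then z i else ω * z i) :
    u ∘ₗ (appendLinearEquiv K m n).toLinearMap =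
      (appendLinearEquiv K m n).toLinearMap ∘ₗ scaleSnd (Fin m → K) (Fin n → K) ω := by
  refine LinearMap.ext fun z => funext fun i => ?_
  refine Fin.addCases ?_ ?_ i <;> simp [hu, appendLinearEquiv_apply, scaleSnd]

theorem bijOn_map_appendLinearEquiv (f : MvPolynomial (Fin m) K) (g : MvPolynomial (Fin n) K)
    {ω : K} {u : (Fin (m + n) → K) →ₗ[K] (Fin (m + n) → K)}
    (hu : ∀ z i, u z i = if (i : ℕ) < m then z i else ω * z i) :
    Set.BijOn (Submodule.map (appendLinearEquiv K m n).toLinearMap)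
      {L | Module.finrank K L = 2 ∧ (∀ z ∈ L, eval z.1 f + eval z.2 g = 0) ∧
        L.map (scaleSnd (Fin m → K) (Fin n → K) ω) = L}
      {L | Module.finrank K L = 2 ∧
        (∀ z ∈ L, eval z (rename (Fin.castAdd n) f + rename (Fin.natAdd m) g) = 0) ∧
        L.map u = L} := by
  have hinj := Submodule.map_injective_of_injective (appendLinearEquiv K m n).injective
  refine (Submodule.orderIsoMapComap (appendLinearEquiv K m n)).toEquiv.bijOn fun L =>
    and_congr ?_ (and_congr ?_ ?_)
  · exact Eq.congr_left (LinearEquiv.finrank_map_eq _ L)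
  · change (∀ z ∈ appendLinearEquiv K m n '' L, _) ↔ _
    simp only [Set.forall_mem_image, eval_appendLinearEquiv_rename_add_rename, SetLike.mem_coe]
  · change (L.map (appendLinearEquiv K m n).toLinearMap).map u = L.map _ ↔ _
    rw [← Submodule.map_comp, comp_appendLinearEquiv_eq_of_apply hu, Submodule.map_comp]
    exact hinj.eq_iff

end Append

theorem stmt_11_general {K : Type*} [Field K] {m n d e : ℕ}
    {f : MvPolynomial (Fin m) K} {g : MvPolynomial (Fin n) K}
    (hf : f.IsHomogeneous d) (hg : g.IsHomogeneous e) (hd : d ≠ 0) (he : e ≠ 0)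
    (hfline : ∀ V : Submodule K (Fin m → K), (∀ x ∈ V, eval x f = 0) → Module.finrank K V ≤ 1)
    (hgline : ∀ V : Submodule K (Fin n → K), (∀ x ∈ V, eval x g = 0) → Module.finrank K V ≤ 1)
    {ω : K} (hω₀ : ω ≠ 0) (hω₁ : ω ≠ 1) {F : MvPolynomial (Fin (m + n)) K}
    (hF : F = rename (Fin.castAdd n) f + rename (Fin.natAdd m) g)
    {u : (Fin (m + n) → K) →ₗ[K] (Fin (m + n) → K)}
    (hu : ∀ z i, u z i = if (i : ℕ) < m then z i else ω * z i) :
    ∃ Φ : {p : Projectivization K (Fin m → K) × Projectivization K (Fin n → K) //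
            eval p.1.rep f = 0 ∧ eval p.2.rep g = 0} ≃
          {L : Submodule K (Fin (m + n) → K) //
            Module.finrank K L = 2 ∧ (∀ z ∈ L, eval z F = 0) ∧ L.map u = L},
      ∀ p, (Φ p : Submodule K (Fin (m + n) → K)) =
        Submodule.span K {Fin.append p.1.1.rep (0 : Fin n → K),
                          Fin.append (0 : Fin m → K) p.1.2.rep} := by
  subst hF
  have hprod := bijOn_submodule_prod_stable_lines (P := fun x => eval x f) (Q := fun x => eval x g)
    (eval_zero_of_isHomogeneous hf hd) (eval_zero_of_isHomogeneous hg he)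
    (fun c x hx => by rw [eval_smul_of_isHomogeneous hf, hx, mul_zero])
    (fun c x hx => by rw [eval_smul_of_isHomogeneous hg, hx, mul_zero]) hfline hgline hω₀ hω₁
  refine ⟨((bijOn_map_appendLinearEquiv f g hu).comp hprod).equiv, fun p => ?_⟩
  rw [span_append_pair_eq_map_prod, ← Projectivization.submodule_eq,
    ← Projectivization.submodule_eq]
  rfl

/-- The map sending a pair `([a], [b])` of points of the plane cubics
`{f = 0}` and `{g = 0}` to the subspace `span((a,0),(0,b)) ⊆ ℂ⁶` is a well-defined
bijection from the product of the two curves onto the set of 2-dimensional subspaces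
`L ⊆ ℂ⁶` with `F|_L ≡ 0` and `u(L) = L`: the fixed locus of `u_X` on the Fano variety
of lines of `{F = 0}` is in bijection with the product of the two plane cubics. -/
theorem stmt_11 (f g : MvPolynomial (Fin 3) ℂ)
    (hf : f.IsHomogeneous 3) (hg : g.IsHomogeneous 3)
    (hfsm : f ≠ 0 ∧ ∀ x : Fin 3 → ℂ, x ≠ 0 → eval x f = 0 → ∃ i : Fin 3, eval x (pderiv i f) ≠ 0)
    (hgsm : g ≠ 0 ∧ ∀ x : Fin 3 → ℂ, x ≠ 0 → eval x g = 0 → ∃ i : Fin 3, eval x (pderiv i g) ≠ 0)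
    (ω : ℂ) (hω3 : ω ^ 3 = 1) (hω1 : ω ≠ 1)
    (F : MvPolynomial (Fin 6) ℂ)
    (hF : F = rename (Fin.castAdd 3) f + rename (Fin.natAdd 3) g)
    (u : (Fin 6 → ℂ) →ₗ[ℂ] (Fin 6 → ℂ))
    (hu : ∀ (z : Fin 6 → ℂ) (i : Fin 6), u z i = if (i : ℕ) < 3 then z i else ω * z i) :
    ∃ Φ : {p : Projectivization ℂ (Fin 3 → ℂ) × Projectivization ℂ (Fin 3 → ℂ) //
            eval p.1.rep f = 0 ∧ eval p.2.rep g = 0} ≃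
          {L : Submodule ℂ (Fin 6 → ℂ) //
            Module.finrank ℂ L = 2 ∧ (∀ z ∈ L, eval z F = 0) ∧ L.map u = L},
      ∀ p, (Φ p : Submodule ℂ (Fin 6 → ℂ)) =
        Submodule.span ℂ {Fin.append p.1.1.rep (0 : Fin 3 → ℂ),
                          Fin.append (0 : Fin 3 → ℂ) p.1.2.rep} :=
  stmt_11_general hf hg three_ne_zero three_ne_zero
    (finrank_le_one_of_smooth_plane_curve hf (by lia) hfsm.2)
    (finrank_le_one_of_smooth_plane_curve hg (by lia) hgsm.2)
    (by rintro rfl; simp at hω3) hω1 hF hu
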